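/- arXiv:1501.05753 — 2 statements merged into one kernel-verified Lean document; each statement's English description precedes it below -/
import Mathlib

section
/- Let G be a countable group. The set Λ_G of traces on G satisfying Lück's condition is closed in the set of all traces on G for the topology of pointwise convergence on G. -/
open scoped ComplexOrder ENNReal
open Filter Topology Matrix

set_option synthInstance.maxHeartbeats 1000000
set_option maxHeartbeats 1000000

noncomputable section

instance piLpCompleteSpace {ι : Type*} [Fintype ι] (p : ℝ≥0∞) (β : ι → Type*)
    [∀ i, UniformSpace (β i)] [∀ i, CompleteSpace (β i)] : CompleteSpace (PiLp p β) :=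
  inferInstance

/-- `φ : G → ℂ` is of positive type: for every finite family `g₁, …, g_m` of elements of
`G`, the matrix `(φ (gᵢ⁻¹ gⱼ))_{i,j}` is positive semidefinite. -/
def IsPosType {G : Type*} [Group G] (φ : G → ℂ) : Prop :=
  ∀ (m : ℕ) (g : Fin m → G), (Matrix.of fun i j => φ ((g i)⁻¹ * g j)).PosSemidef

/-- A trace on a (discrete) group: a function of positive type, constant on conjugacy
classes. -/
def IsGroupTrace {G : Type*} [Group G] (φ : G → ℂ) : Prop :=
  IsPosType φ ∧ ∀ g h : G, φ (h * g * h⁻¹) = φ g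

/-- GNS representation data for a function `φ` on a group `G`: a Hilbert space `H`, a
unital algebra morphism `π` from `ℂG = MonoidAlgebra ℂ G` to the bounded operators on `H`
sending group elements to unitaries (this is the condition `star_of`), and a cyclic vector
`ξ` whose matrix coefficient is (the linear extension of) `φ`. -/
structure GNSRep (G : Type*) [Group G] (φ : G → ℂ) where
  H : Type
  [instNormed : NormedAddCommGroup H]
  [instInner : InnerProductSpace ℂ H]
  [instComplete : CompleteSpace H]
  π : MonoidAlgebra ℂ G →ₐ[ℂ] (H →L[ℂ] H)
  ξ : H
  star_of : ∀ g : G, star (π (MonoidAlgebra.of ℂ G g)) = π (MonoidAlgebra.of ℂ G g⁻¹)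
  inner_eq : ∀ g : G, (inner ℂ ξ (π (MonoidAlgebra.of ℂ G g) ξ) : ℂ) = φ g
  cyclic : Dense (Set.range fun x : MonoidAlgebra ℂ G => π x ξ)

attribute [instance] GNSRep.instNormed GNSRep.instInner GNSRep.instComplete

/-- The vector `ξᵢ ∈ Hⁿ`: the cyclic vector `ξ` in the `i`-th summand, `0` elsewhere. -/
def GNSRep.vec {G : Type*} [Group G] {φ : G → ℂ} (R : GNSRep G φ) {n : ℕ} (i : Fin n) :
    PiLp 2 (fun _ : Fin n => R.H) :=
  (PiLp.continuousLinearEquiv 2 ℂ (fun _ : Fin n => R.H)).symm (Pi.single i R.ξ)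

/-- `|x| = (x* x)^{1/2}`, via the continuous functional calculus. -/
def cfcAbs {A : Type*} [CStarAlgebra A] (x : A) : A := cfc Real.sqrt (star x * x)

/-- The set of continuous majorants of `ln₊` on `[0,∞)`.  (Recall that `Real.log 0 = 0`,
so that `Real.log` agrees with `ln₊` on `[0,∞)`.) -/
def lnPlusMajorants : Set (ℝ → ℝ) :=
  {g | ContinuousOn g (Set.Ici 0) ∧ ∀ t ∈ Set.Ici (0:ℝ), Real.log t ≤ g t}

/-- The action of a matrix `a ∈ Mₙ(R)` on the Hilbert space `H'ⁿ` (with its `ℓ²` inner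
product) induced by a morphism `π : R → B(H')`: `(π_n(a) v)_i = Σ_j π(a i j) (v j)`. -/
def matAct {R H' : Type*} [Ring R] [Algebra ℂ R] [NormedAddCommGroup H']
    [InnerProductSpace ℂ H'] {n : ℕ}
    (π : R →ₐ[ℂ] (H' →L[ℂ] H')) (a : Matrix (Fin n) (Fin n) R) :
    PiLp 2 (fun _ : Fin n => H') →L[ℂ] PiLp 2 (fun _ : Fin n => H') :=
  (PiLp.continuousLinearEquiv 2 ℂ _).symm.toContinuousLinearMap ∘L
    (ContinuousLinearMap.pi fun i => ∑ j, (π (a i j)).comp (ContinuousLinearMap.proj j)) ∘L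
    (PiLp.continuousLinearEquiv 2 ℂ _).toContinuousLinearMap

/-- `(φ ⊗ Trₙ)(ln₊ |a|) := inf { Σᵢ ⟨ξᵢ, g(|π(a)|) ξᵢ⟩ : g : [0,∞) → ℝ continuous, g ≥ ln₊ }`,
an element of `ℝ ∪ {−∞}`, computed in the GNS representation `R`. -/
def GNSRep.lnPlusQ {G : Type*} [Group G] {φ : G → ℂ} (R : GNSRep G φ) {n : ℕ}
    (a : Matrix (Fin n) (Fin n) (MonoidAlgebra ℂ G)) : EReal :=
  ⨅ g ∈ lnPlusMajorants,
    ((∑ i, (inner ℂ (R.vec i) (cfc g (cfcAbs (matAct R.π a)) (R.vec i)) : ℂ)).re : EReal)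

/-- A function `φ` on `G` satisfies Lück's condition if `(φ ⊗ Trₙ)(ln₊|a|) ≥ 0` for every
`n ≥ 1` and every `a ∈ Mₙ(ℤG)` (an `a ∈ Mₙ(ℂG)` whose coefficients are all integers),
where the quantity is computed in any GNS representation of `φ`. -/
def SatisfiesLueck {G : Type*} [Group G] (φ : G → ℂ) : Prop :=
  ∀ (n : ℕ), 0 < n → ∀ a : Matrix (Fin n) (Fin n) (MonoidAlgebra ℂ G),
    (∀ (i j : Fin n) (g : G), ∃ m : ℤ, (a i j).coeff g = (m : ℂ)) →
    ∀ R : GNSRep G φ, 0 ≤ R.lnPlusQ a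


namespace GNSAux

theorem posSemidef_kernel {G : Type*} [Group G] {φ : G → ℂ} (h : IsPosType φ) :
    (Matrix.of fun x y : G => φ (x⁻¹ * y)).PosSemidef := by
  classical
  refine ⟨?_, fun x => ?_⟩
  · ext a b
    have h2 := congrFun (congrFun (h 2 ![a, b]).1 0) 1
    simpa [Matrix.conjTranspose] using h2
  · have e := x.support.equivFin.symm
    have h2 := (h x.support.card (fun i => (e i : G)))
    have h3 := (Matrix.posSemidef_submatrix_equiv e.symm).2 h2
    have h4 := h3.2 (Finsupp.equivFunOnFinite.symm fun i : x.support => x i)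
    rw [Finsupp.sum_fintype _ _ (by simp)] at h4
    simp only [Finsupp.sum_fintype, mul_zero, implies_true] at h4
    simp only [Matrix.submatrix_apply, Matrix.of_apply, Equiv.apply_symm_apply,
      Finsupp.equivFunOnFinite_symm_apply_apply] at h4
    rw [Finset.univ_eq_attach] at h4
    refine h4.trans_eq ?_
    unfold Finsupp.sum
    rw [← Finset.sum_attach x.support]
    refine Finset.sum_congr rfl fun i _ => ?_
    exact Finset.sum_attach x.support (fun j => star (x i) * φ ((i : G)⁻¹ * j) * x j)

/-- The pre-Hilbert space. -/
def Pre {G : Type*} [Group G] {φ : G → ℂ} (_h : IsPosType φ) := G →₀ ℂ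

variable {G : Type*} [Group G] {φ : G → ℂ} (h : IsPosType φ)

instance : AddCommGroup (Pre h) := inferInstanceAs (AddCommGroup (G →₀ ℂ))
instance : Module ℂ (Pre h) := inferInstanceAs (Module ℂ (G →₀ ℂ))

/-- The form on finitely supported functions. -/
def form (φ : G → ℂ) (x y : G →₀ ℂ) : ℂ :=
  x.sum fun g c => y.sum fun k d => star c * d * φ (g⁻¹ * k)

theorem form_symm (h : IsPosType φ) (x y : G →₀ ℂ) : (starRingEnd ℂ) (form φ y x) = form φ x y := by
  unfold form
  rw [Finsupp.sum_comm]
  simp only [map_finsuppSum]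
  refine Finsupp.sum_congr fun g _ => Finsupp.sum_congr fun k _ => ?_
  have := (posSemidef_kernel h).1.apply g k
  simp only [Matrix.of_apply] at this
  rw [← this]
  simp [mul_comm]

theorem form_add (x y z : G →₀ ℂ) : form φ (x + y) z = form φ x z + form φ y z := by
  unfold form
  rw [Finsupp.sum_add_index'] <;> simp [← Finsupp.sum_add, add_mul]

theorem form_smul (x y : G →₀ ℂ) (r : ℂ) :
    form φ (r • x) y = (starRingEnd ℂ) r * form φ x y := by
  unfold form
  rw [Finsupp.sum_smul_index] <;> simp [Finsupp.mul_sum, ← mul_assoc]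

/-- The semi-inner product. -/
@[reducible] def core : PreInnerProductSpace.Core ℂ (Pre h) where
  inner x y := form φ x y
  conj_inner_symm x y := form_symm h x y
  re_inner_nonneg x := by
    have := (posSemidef_kernel h).2 x
    have := (Complex.le_def.1 this).1
    simp only [Matrix.of_apply, mul_right_comm] at this
    exact this
  add_left x y z := form_add x y z
  smul_left x y r := form_smul x y r

instance : SeminormedAddCommGroup (Pre h) :=
  letI := core h
  InnerProductSpace.Core.toSeminormedAddCommGroup (𝕜 := ℂ)

instance : InnerProductSpace ℂ (Pre h) :=
  letI := core h
  .ofCore _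

theorem inner_def (x y : Pre h) : inner ℂ x y = Finsupp.sum (show G →₀ ℂ from x) fun g c =>
    Finsupp.sum (show G →₀ ℂ from y) fun k d => star c * d * φ (g⁻¹ * k) := rfl

/-- basis vectors -/
def bas (g : G) : Pre h := Finsupp.single g (1:ℂ)

/-- translation -/
def tr (g : G) : Pre h →ₗ[ℂ] Pre h := Finsupp.lmapDomain ℂ ℂ (fun x : G => g * x)

theorem tr_apply (g : G) (x : Pre h) :
  tr h g x = Finsupp.mapDomain (fun y : G => g * y) (show G →₀ ℂ from x) := rfl

theorem tr_inner (g : G) (x y : Pre h) : inner ℂ (tr h g x) (tr h g y) = inner ℂ x y := by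
  rw [inner_def, inner_def, tr_apply, tr_apply]
  refine (Finsupp.sum_mapDomain_index ?_ ?_).trans ?_
  · simp
  · intros; simp [← Finsupp.sum_add, add_mul]
  refine Finsupp.sum_congr fun a _ => ?_
  refine (Finsupp.sum_mapDomain_index ?_ ?_).trans ?_
  · simp
  · intros; simp [add_mul, mul_add]
  · simp [mul_assoc]

theorem tr_mul (g k : G) (x : Pre h) : tr h (g * k) x = tr h g (tr h k x) := by
  simp only [tr_apply]
  refine Eq.trans ?_ (Finsupp.mapDomain_comp (f := fun y : G => k * y) (g := fun y : G => g * y))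
  congr 1
  ext y; simp [mul_assoc]

theorem tr_one (x : Pre h) : tr h 1 x = x := by
  simp only [tr_apply, one_mul]
  exact Finsupp.mapDomain_id

theorem tr_bas (g k : G) : tr h g (bas h k) = bas h (g * k) := Finsupp.mapDomain_single

theorem tr_norm (g : G) (x : Pre h) : ‖tr h g x‖ = ‖x‖ := by
  rw [@norm_eq_sqrt_re_inner ℂ, @norm_eq_sqrt_re_inner ℂ, tr_inner]

open UniformSpace

/-- translation on the completion -/
def U (g : G) : Completion (Pre h) →L[ℂ] Completion (Pre h) :=
  ((Completion.toComplₗᵢ (𝕜 := ℂ) (E := Pre h)).toLinearMap ∘ₗ tr h g).extendOfNorm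
    (Completion.toComplₗᵢ (𝕜 := ℂ) (E := Pre h)).toLinearMap

theorem U_coe (g : G) (x : Pre h) : U h g (x : Completion (Pre h)) = ((tr h g x : Pre h) : Completion (Pre h)) :=
  LinearMap.extendOfNorm_eq (f := (Completion.toComplₗᵢ (𝕜 := ℂ) (E := Pre h)).toLinearMap ∘ₗ tr h g)
    (e := (Completion.toComplₗᵢ (𝕜 := ℂ) (E := Pre h)).toLinearMap)
    Completion.denseRange_coe ⟨1, fun x => by simp [tr_norm]⟩ x

/-- the representation on the completion -/
def Uhom : G →* (Completion (Pre h) →L[ℂ] Completion (Pre h)) where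
  toFun := U h
  map_one' := by
    ext x
    induction x using Completion.induction_on with
    | hp => exact isClosed_eq (by fun_prop) (by fun_prop)
    | ih a => simp [U_coe, tr_one]
  map_mul' g k := by
    ext x
    induction x using Completion.induction_on with
    | hp => exact isClosed_eq (by fun_prop) (by fun_prop)
    | ih a => simp [U_coe, tr_mul]

theorem U_inner (g : G) (x y : Completion (Pre h)) :
    inner ℂ (U h g x) (U h g y) = inner ℂ x y := by
  induction x, y using Completion.induction_on₂ with
  | hp => exact isClosed_eq (by fun_prop) (by fun_prop)
  | ih a b => simp [U_coe, tr_inner]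

theorem U_star (g : G) : star (U h g) = U h g⁻¹ := by
  symm
  rw [ContinuousLinearMap.star_eq_adjoint, ContinuousLinearMap.eq_adjoint_iff]
  intro x y
  rw [← U_inner h g (U h g⁻¹ x) y]
  have : U h g (U h g⁻¹ x) = x := by
    have := congrArg (fun T => T x) ((Uhom h).map_mul g g⁻¹)
    rw [mul_inv_cancel, map_one] at this
    exact this.symm
  rw [this]

/-- GNS for `G : Type` -/
def rep0 {G : Type} [Group G] {φ : G → ℂ} (h : IsPosType φ) : GNSRep G φ where
  H := Completion (Pre h)
  π := MonoidAlgebra.lift ℂ _ G (Uhom h)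
  ξ := (bas h 1 : Pre h)
  star_of g := by
    rw [MonoidAlgebra.lift_of, MonoidAlgebra.lift_of]
    exact U_star h g
  inner_eq g := by
    rw [MonoidAlgebra.lift_of]
    change inner ℂ _ (U h g _) = _
    rw [U_coe, tr_bas, Completion.inner_coe, inner_def]
    simp [bas]
  cyclic := by
    have : (fun x : MonoidAlgebra ℂ G => (MonoidAlgebra.lift ℂ _ G (Uhom h)) x
        ((bas h 1 : Pre h) : Completion (Pre h))) =
        fun x => ((show Pre h from x.coeff : Pre h) : Completion (Pre h)) := by
      funext x
      induction x using MonoidAlgebra.induction_linear with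
      | zero => simp; rfl
      | add a b ha hb => 
        simp only [map_add, _root_.add_apply, ha, hb]
        exact (Completion.coe_add _ _).symm
      | single g c =>
        rw [MonoidAlgebra.lift_single]
        change c • U h g _ = _
        rw [U_coe, tr_bas, ← Completion.coe_smul]
        congr 1
        change c • Finsupp.single (g * 1) (1:ℂ) = Finsupp.single g c
        simp
    rw [this]
    have := (Completion.denseRange_coe (α := Pre h)).comp
      (f := fun x : MonoidAlgebra ℂ G => (show Pre h from x.coeff))
      (Function.Surjective.denseRange fun y => ⟨.ofCoeff y, rfl⟩) (Completion.continuous_coe _)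
    exact this

/-- GNS for countable `G` -/
theorem exists_rep {G : Type*} [Group G] [Countable G] {φ : G → ℂ} (h : IsPosType φ) :
    Nonempty (GNSRep G φ) := by
  let e : Shrink.{0} G ≃* G := Shrink.mulEquiv
  have h' : IsPosType (φ ∘ e) := fun m g => by simpa using h m (fun i => e (g i))
  let R := rep0 h'
  refine ⟨GNSRep.mk R.H (R.π.comp (MonoidAlgebra.domCongr ℂ ℂ e.symm).toAlgHom) R.ξ
    (fun g => ?_) (fun g => ?_) ?_⟩
  · simpa using R.star_of (e.symm g)
  · simpa using R.inner_eq (e.symm g)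
  · have := R.cyclic
    convert this using 1
    ext v
    constructor
    · rintro ⟨x, rfl⟩
      exact ⟨_, rfl⟩
    · rintro ⟨x, rfl⟩
      exact ⟨(MonoidAlgebra.domCongr ℂ ℂ e.symm).symm x, by
        change (R.π ((MonoidAlgebra.domCongr ℂ ℂ e.symm)
          ((MonoidAlgebra.domCongr ℂ ℂ e.symm).symm x))) R.ξ = _
        rw [AlgEquiv.apply_symm_apply]⟩

end GNSAux

namespace LueckAux

variable {G : Type*} [Group G]

theorem exists_star (x : MonoidAlgebra ℂ G) :
    ∃ y : MonoidAlgebra ℂ G, ∀ (φ : G → ℂ) (R : GNSRep G φ), star (R.π x) = R.π y := by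
  induction x using MonoidAlgebra.induction_linear with
  | zero => exact ⟨0, by simp⟩
  | add a b ha hb =>
    obtain ⟨a', ha⟩ := ha
    obtain ⟨b', hb⟩ := hb
    exact ⟨a' + b', fun φ R => by rw [map_add, star_add, ha, hb, map_add]⟩
  | single g c =>
    refine ⟨star c • MonoidAlgebra.of ℂ G g⁻¹, fun φ R => ?_⟩
    have : MonoidAlgebra.single g c = c • MonoidAlgebra.of ℂ G g := by simp
    rw [this, map_smul, star_smul, R.star_of, map_smul]

theorem exists_norm (x : MonoidAlgebra ℂ G) :
    ∃ C : ℝ, 0 ≤ C ∧ ∀ (φ : G → ℂ) (R : GNSRep G φ), ‖R.π x‖ ≤ C := by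
  induction x using MonoidAlgebra.induction_linear with
  | zero => exact ⟨0, le_rfl, by simp⟩
  | add a b ha hb =>
    obtain ⟨a', ha0, ha⟩ := ha
    obtain ⟨b', hb0, hb⟩ := hb
    exact ⟨a' + b', by positivity, fun φ R => by
      rw [map_add]; exact (norm_add_le _ _).trans (add_le_add (ha φ R) (hb φ R))⟩
  | single g c =>
    refine ⟨‖c‖, norm_nonneg _, fun φ R => ?_⟩
    have : MonoidAlgebra.single g c = c • MonoidAlgebra.of ℂ G g := by simp
    have h1 : ‖R.π (MonoidAlgebra.of ℂ G g)‖ ≤ 1 := by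
      have h2 : star (R.π (MonoidAlgebra.of ℂ G g)) * R.π (MonoidAlgebra.of ℂ G g) = 1 := by
        rw [R.star_of, ← map_mul, ← map_mul, inv_mul_cancel, map_one, map_one]
      have h3 := CStarRing.norm_star_mul_self (x := R.π (MonoidAlgebra.of ℂ G g))
      rw [h2] at h3
      have h4 : ‖(1 : R.H →L[ℂ] R.H)‖ ≤ 1 := ContinuousLinearMap.norm_id_le
      nlinarith [norm_nonneg (R.π (MonoidAlgebra.of ℂ G g))]
    rw [this, map_smul, norm_smul]
    nlinarith [norm_nonneg c]

section mat
variable {R H' : Type*} [Ring R] [Algebra ℂ R] [NormedAddCommGroup H']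
    [InnerProductSpace ℂ H'] {n : ℕ} (π : R →ₐ[ℂ] (H' →L[ℂ] H'))

theorem matAct_apply (a : Matrix (Fin n) (Fin n) R) (v : PiLp 2 (fun _ : Fin n => H')) (i : Fin n) :
    matAct π a v i = ∑ j, π (a i j) (v j) := by
  simp [matAct]

theorem matAct_add (a b : Matrix (Fin n) (Fin n) R) :
    matAct π (a + b) = matAct π a + matAct π b := by
  ext v i
  simp [matAct_apply, Finset.sum_add_distrib]

theorem matAct_smul (c : ℂ) (b : Matrix (Fin n) (Fin n) R) :
    matAct π (c • b) = c • matAct π b := by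
  ext v i
  simp [matAct_apply, Finset.smul_sum]

theorem matAct_one : matAct π (1 : Matrix (Fin n) (Fin n) R) = 1 := by
  ext v i
  rw [matAct_apply, Finset.sum_eq_single i]
  · simp
  · intro j _ hj
    rw [Matrix.one_apply_ne hj.symm]; simp
  · simp

theorem matAct_mul (a b : Matrix (Fin n) (Fin n) R) :
    matAct π (a * b) = matAct π a * matAct π b := by
  ext v i
  rw [ContinuousLinearMap.mul_apply]
  simp only [matAct_apply, Matrix.mul_apply, map_sum, map_mul,
    ContinuousLinearMap.sum_apply, ContinuousLinearMap.mul_apply]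
  rw [Finset.sum_comm]

theorem matAct_star [CompleteSpace H'] (a b : Matrix (Fin n) (Fin n) R)
    (h : ∀ i j, star (π (a j i)) = π (b i j)) : star (matAct π a) = matAct π b := by
  symm
  rw [ContinuousLinearMap.star_eq_adjoint, ContinuousLinearMap.eq_adjoint_iff]
  intro x y
  simp only [PiLp.inner_apply, matAct_apply, sum_inner, inner_sum]
  rw [Finset.sum_comm]
  refine Finset.sum_congr rfl fun i _ => Finset.sum_congr rfl fun j _ => ?_
  rw [← h, ContinuousLinearMap.star_eq_adjoint, ContinuousLinearMap.adjoint_inner_left]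

theorem matAct_norm (a : Matrix (Fin n) (Fin n) R) (C : Fin n → Fin n → ℝ)
    (h : ∀ i j, ‖π (a i j)‖ ≤ C i j) : ‖matAct π a‖ ≤ ∑ i, ∑ j, C i j := by
  have hC : ∀ i j, 0 ≤ C i j := fun i j => (norm_nonneg _).trans (h i j)
  refine ContinuousLinearMap.opNorm_le_bound _
    (Finset.sum_nonneg fun i _ => Finset.sum_nonneg fun j _ => hC i j) fun v => ?_
  have h1 : ∀ w : PiLp 2 (fun _ : Fin n => H'), ‖w‖ ≤ ∑ i, ‖w i‖ := by
    intro w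
    rw [PiLp.norm_eq_of_L2]
    refine Real.sqrt_le_iff.2 ⟨Finset.sum_nonneg fun i _ => norm_nonneg _, ?_⟩
    exact Finset.sum_sq_le_sq_sum_of_nonneg fun i _ => norm_nonneg _
  refine (h1 _).trans ?_
  rw [Finset.sum_mul]
  refine Finset.sum_le_sum fun i _ => ?_
  rw [matAct_apply, Finset.sum_mul]
  refine (norm_sum_le _ _).trans (Finset.sum_le_sum fun j _ => ?_)
  refine ((π (a i j)).le_opNorm _).trans ?_
  exact mul_le_mul (h i j) (PiLp.norm_apply_le v j) (norm_nonneg _) (hC i j)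

end mat

theorem exists_starMul {n : ℕ} (a : Matrix (Fin n) (Fin n) (MonoidAlgebra ℂ G)) :
    ∃ b : Matrix (Fin n) (Fin n) (MonoidAlgebra ℂ G), ∀ (φ : G → ℂ) (R : GNSRep G φ),
      star (matAct R.π a) * matAct R.π a = matAct R.π b := by
  choose s hs using exists_star (G := G)
  refine ⟨(Matrix.of fun i j => s (a j i)) * a, fun φ R => ?_⟩
  rw [matAct_mul, matAct_star R.π a (Matrix.of fun i j => s (a j i))]
  intro i j
  exact hs _ φ R

theorem exists_matNorm {n : ℕ} (a : Matrix (Fin n) (Fin n) (MonoidAlgebra ℂ G)) :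
    ∃ C : ℝ, 0 ≤ C ∧ ∀ (φ : G → ℂ) (R : GNSRep G φ), ‖matAct R.π a‖ ≤ C := by
  choose s hs0 hs using exists_norm (G := G)
  exact ⟨_, Finset.sum_nonneg fun i _ => Finset.sum_nonneg fun j _ => hs0 (a i j),
    fun φ R => matAct_norm R.π a (fun i j => s (a i j)) fun i j => hs _ φ R⟩

theorem exists_aeval {n : ℕ} (b : Matrix (Fin n) (Fin n) (MonoidAlgebra ℂ G))
    (p : Polynomial ℝ) :
    ∃ c : Matrix (Fin n) (Fin n) (MonoidAlgebra ℂ G), ∀ (φ : G → ℂ) (R : GNSRep G φ),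
      Polynomial.aeval (matAct R.π b) p = matAct R.π c := by
  induction p using Polynomial.induction_on' with
  | add p q hp hq =>
    obtain ⟨c, hc⟩ := hp
    obtain ⟨d, hd⟩ := hq
    exact ⟨c + d, fun φ R => by rw [map_add, hc, hd, matAct_add]⟩
  | monomial k r =>
    refine ⟨(r : ℂ) • b ^ k, fun φ R => ?_⟩
    rw [Polynomial.aeval_monomial, matAct_smul]
    have h1 : matAct R.π (b ^ k) = matAct R.π b ^ k := by
      induction k with
      | zero => rw [pow_zero, pow_zero, matAct_one]
      | succ k ih => rw [pow_succ, pow_succ, matAct_mul, ih]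
    rw [h1, ← Algebra.smul_def]
    ext v i
    simp

theorem exists_approx {n : ℕ} (a : Matrix (Fin n) (Fin n) (MonoidAlgebra ℂ G))
    {g : ℝ → ℝ} (hg : ContinuousOn g (Set.Ici 0)) {ε : ℝ} (hε : 0 < ε) :
    ∃ c : Matrix (Fin n) (Fin n) (MonoidAlgebra ℂ G), ∀ (φ : G → ℂ) (R : GNSRep G φ),
      ‖cfc g (cfcAbs (matAct R.π a)) - matAct R.π c‖ ≤ ε := by
  obtain ⟨b, hb⟩ := exists_starMul a
  obtain ⟨C, hC0, hC⟩ := exists_matNorm b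
  have hcont : ContinuousOn (fun t => g (Real.sqrt t)) (Set.Icc 0 C) :=
    hg.comp Real.continuous_sqrt.continuousOn fun t _ => Real.sqrt_nonneg t
  obtain ⟨p, hp⟩ := exists_polynomial_near_of_continuousOn 0 C _ hcont ε hε
  obtain ⟨c, hc⟩ := exists_aeval b p
  refine ⟨c, fun φ R => ?_⟩
  set T := matAct R.π a with hT
  have hsa : IsSelfAdjoint (star T * T) := IsSelfAdjoint.star_mul_self T
  have hspec : spectrum ℝ (star T * T) ⊆ Set.Icc 0 C := by
    intro t ht
    refine ⟨spectrum_nonneg_of_nonneg (star_mul_self_nonneg T) ht, ?_⟩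
    have h1 : ‖t‖ ≤ ‖star T * T‖ := by
      have h2 := spectrum.norm_le_norm_mul_of_mem ht
      have h3 : ‖(1 : PiLp 2 (fun _ : Fin n => R.H) →L[ℂ] PiLp 2 (fun _ : Fin n => R.H))‖ ≤ 1 :=
        ContinuousLinearMap.norm_id_le
      exact h2.trans (mul_le_of_le_one_right (norm_nonneg _) h3)
    rw [hb] at h1
    exact (Real.le_norm_self t).trans (h1.trans (hC φ R))
  have h1 : cfc g (cfcAbs T) = cfc (fun t => g (Real.sqrt t)) (star T * T) := by
    unfold cfcAbs
    have hg' : ContinuousOn g (Real.sqrt '' spectrum ℝ (star T * T)) := by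
      refine hg.mono ?_
      rintro _ ⟨t, _, rfl⟩
      exact Real.sqrt_nonneg t
    exact (cfc_comp' g Real.sqrt (star T * T) hg' Real.continuous_sqrt.continuousOn hsa).symm
  rw [h1, ← hc φ R, ← hb φ R, ← cfc_polynomial p (star T * T) hsa,
    ← cfc_sub _ _ (star T * T) (hcont.mono hspec) p.continuous.continuousOn]
  refine norm_cfc_le hε.le fun t ht => ?_
  rw [norm_sub_rev]
  exact (hp t (hspec ht)).le

/-- linear extension of `φ`, traced. -/
def trc {n : ℕ} (c : Matrix (Fin n) (Fin n) (MonoidAlgebra ℂ G)) (φ : G → ℂ) : ℂ :=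
  ∑ i, (c i i).coeff.sum fun g z => z * φ g

theorem trc_eq {n : ℕ} (c : Matrix (Fin n) (Fin n) (MonoidAlgebra ℂ G)) (φ : G → ℂ)
    (R : GNSRep G φ) :
    ∑ i, (inner ℂ (R.vec i) (matAct R.π c (R.vec i)) : ℂ) = trc c φ := by
  have h0 : ∀ x : MonoidAlgebra ℂ G, inner ℂ R.ξ (R.π x R.ξ) = x.coeff.sum fun g z => z * φ g := by
    intro x
    induction x using MonoidAlgebra.induction_linear with
    | zero => simp
    | add a b ha hb =>
      rw [map_add, _root_.add_apply, inner_add_right, ha, hb, MonoidAlgebra.coeff_add,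
        Finsupp.sum_add_index' (by simp) (by intros; ring)]
    | single g z =>
      have : MonoidAlgebra.single g z = z • MonoidAlgebra.of ℂ G g := by simp
      rw [this, map_smul, _root_.smul_apply, inner_smul_right, R.inner_eq, ← this]
      simp
  unfold trc
  refine Finset.sum_congr rfl fun i _ => ?_
  rw [← h0, PiLp.inner_apply, Finset.sum_eq_single i]
  · rw [matAct_apply, Finset.sum_eq_single i]
    · simp [GNSRep.vec]
    · intro j _ hj; simp [GNSRep.vec, hj]
    · simp
  · intro j _ hj; simp [GNSRep.vec, hj]
  · simp

theorem trc_approx {n : ℕ} (c : Matrix (Fin n) (Fin n) (MonoidAlgebra ℂ G)) (φ : G → ℂ)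
    (R : GNSRep G φ) (S : PiLp 2 (fun _ : Fin n => R.H) →L[ℂ] PiLp 2 (fun _ : Fin n => R.H))
    {ε : ℝ} (h : ‖S - matAct R.π c‖ ≤ ε) :
    |(∑ i, (inner ℂ (R.vec i) (S (R.vec i)) : ℂ)).re - (trc c φ).re| ≤ n * (ε * (φ 1).re) := by
  rw [← trc_eq c φ R, ← Complex.sub_re, ← Finset.sum_sub_distrib]
  refine (Complex.abs_re_le_norm _).trans ((norm_sum_le _ _).trans ?_)
  have h1 : ∀ i : Fin n, ‖R.vec i‖ ^ 2 = (φ 1).re := by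
    intro i
    have : ‖R.vec i‖ = ‖R.ξ‖ := by
      rw [GNSRep.vec]
      exact PiLp.norm_single 2 (fun _ : Fin n => R.H) i R.ξ
    rw [this, ← R.inner_eq 1, map_one, map_one, ContinuousLinearMap.one_apply,
      inner_self_eq_norm_sq_to_K]
    norm_cast
  refine (Finset.sum_le_card_nsmul _ _ (ε * (φ 1).re) fun i _ => ?_).trans_eq (by simp)
  rw [← inner_sub_right, ← _root_.sub_apply, ← h1 i]
  refine (norm_inner_le_norm _ _).trans ?_
  have := (S - matAct R.π c).le_of_opNorm_le h (R.vec i)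
  nlinarith [norm_nonneg (R.vec i)]

theorem trc_continuous {n : ℕ} (c : Matrix (Fin n) (Fin n) (MonoidAlgebra ℂ G)) :
    Continuous (trc c) := by
  unfold trc Finsupp.sum
  fun_prop

end LueckAux

/-- for a countable group `G`, the set `Λ_G` of traces on `G` satisfying
Lück's condition is closed in the set of all traces on `G` for the topology of pointwise
convergence. -/
theorem stmt6 {G : Type*} [Group G] [Countable G] :
    IsClosed {φ : {φ : G → ℂ // IsGroupTrace φ} | SatisfiesLueck φ.1} := by
  rw [← closure_subset_iff_isClosed]
  intro φ hφ n hn a ha R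
  unfold GNSRep.lnPlusQ
  refine le_iInf₂ fun g hg => ?_
  rw [EReal.coe_nonneg]
  refine le_of_forall_pos_lt_add fun δ hδ => ?_
  -- choose ε
  have hφ1 : 0 ≤ (φ.1 1).re := by
    have h := (φ.2.1 1 (fun _ => 1)).diag_nonneg (i := 0)
    simpa using (Complex.le_def.1 h).1
  obtain ⟨ε, hε, hεδ⟩ : ∃ ε : ℝ, 0 < ε ∧ 2 * (n * (ε * (φ.1 1).re)) < δ := by
    refine ⟨δ / (2 * n * (φ.1 1).re + 1), by positivity, ?_⟩
    have h1 : 0 < 2 * n * (φ.1 1).re + 1 := by positivity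
    have : 2 * (n * (δ / (2 * n * (φ.1 1).re + 1) * (φ.1 1).re)) =
      δ * (2 * n * (φ.1 1).re) / (2 * n * (φ.1 1).re + 1) := by ring
    rw [this, div_lt_iff₀ h1]
    nlinarith
  obtain ⟨c, hc⟩ := LueckAux.exists_approx a hg.1 hε
  have hclosed : IsClosed {ψ : {φ : G → ℂ // IsGroupTrace φ} |
      0 ≤ (LueckAux.trc c ψ.1).re + n * (ε * (ψ.1 1).re)} := by
    have := LueckAux.trc_continuous c
    refine isClosed_le continuous_const ?_
    have h1 : Continuous fun ψ : {φ : G → ℂ // IsGroupTrace φ} => ψ.1 1 :=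
      (continuous_apply 1).comp continuous_subtype_val
    have h2 := this.comp (continuous_subtype_val (p := fun φ : G → ℂ => IsGroupTrace φ))
    exact (Complex.continuous_re.comp h2).add
      (continuous_const.mul (continuous_const.mul (Complex.continuous_re.comp h1)))
  have hmem := closure_minimal (t := {ψ : {φ : G → ℂ // IsGroupTrace φ} |
      0 ≤ (LueckAux.trc c ψ.1).re + n * (ε * (ψ.1 1).re)}) (fun ψ hψ => ?_) hclosed hφ
  · have h1 := abs_le.1 (LueckAux.trc_approx c φ.1 R _ (hc φ.1 R))
    have h2 : 0 ≤ (LueckAux.trc c φ.1).re + n * (ε * (φ.1 1).re) := hmem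
    linarith [h1.1]
  · obtain ⟨Rψ⟩ := GNSAux.exists_rep ψ.2.1
    have h0 : 0 ≤ Rψ.lnPlusQ a := hψ n hn a ha Rψ
    have h3 := h0.trans (iInf₂_le g hg)
    rw [EReal.coe_nonneg] at h3
    have h1 := abs_le.1 (LueckAux.trc_approx c ψ.1 Rψ _ (hc ψ.1 Rψ))
    rw [Set.mem_setOf_eq]
    linarith [h1.2]

end
end

section
/- Every countable sofic group Γ satisfies Lück's determinant conjecture: the canonical trace τ_Γ (τ_Γ(x) = 1 if x = 1, and 0 otherwise) satisfies Lück's condition, i.e. for every n ≥ 1 and every a ∈ M_n(ℤΓ), (τ_Γ ⊗ Tr_n)(ln_+|a|) ≥ 0. -/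
open scoped ComplexOrder ENNReal
open Filter Topology Matrix

set_option synthInstance.maxHeartbeats 1000000
set_option maxHeartbeats 1000000

noncomputable section

/-- `τ_k(σ) = card {x | σ x = x} / k`, the fixed-point ratio of a permutation. -/
def permFixRatio {k : ℕ} (σ : Equiv.Perm (Fin k)) : ℝ :=
  (Finset.univ.filter fun x => σ x = x).card / k

/-- `δ_k(σ₁, σ₂) = card {x | σ₁ x ≠ σ₂ x} / k`, the normalized Hamming distance. -/
def permHamming {k : ℕ} (σ₁ σ₂ : Equiv.Perm (Fin k)) : ℝ :=
  (Finset.univ.filter fun x => σ₁ x ≠ σ₂ x).card / k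

/-- A group `Γ` is sofic: there are maps `f_n : Γ → S_{k_n}` (not necessarily
homomorphisms) which are asymptotically multiplicative and asymptotically free. -/
def IsSofic (Γ : Type*) [Group Γ] : Prop :=
  ∃ (k : ℕ → ℕ) (f : ∀ n, Γ → Equiv.Perm (Fin (k n))),
    (∀ n, 0 < k n) ∧
    (∀ x y : Γ, Tendsto (fun n => permHamming (f n x * f n y) (f n (x * y))) atTop (𝓝 0)) ∧
    (∀ x : Γ, x ≠ 1 → Tendsto (fun n => permHamming (f n x) 1) atTop (𝓝 1))

open Classical in
/-- The canonical trace on a group: `τ_Γ(x) = 1` if `x = 1` and `0` otherwise. -/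
def canonicalTrace (Γ : Type*) [Group Γ] : Γ → ℂ := fun x => if x = 1 then 1 else 0

section HammingPart

lemma permHamming_self {k : ℕ} (a : Equiv.Perm (Fin k)) : permHamming a a = 0 := by
  simp [permHamming]

lemma permHamming_nonneg {k : ℕ} (a b : Equiv.Perm (Fin k)) : 0 ≤ permHamming a b := by
  unfold permHamming; positivity

lemma permHamming_comm {k : ℕ} (a b : Equiv.Perm (Fin k)) :
    permHamming a b = permHamming b a := by
  simp [permHamming, ne_comm]

lemma permHamming_triangle {k : ℕ} (a b c : Equiv.Perm (Fin k)) :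
    permHamming a c ≤ permHamming a b + permHamming b c := by
  unfold permHamming
  rw [← add_div]
  gcongr
  norm_cast
  refine le_trans (Finset.card_le_card ?_) (Finset.card_union_le _ _)
  intro x hx
  simp only [Finset.mem_filter, Finset.mem_univ, true_and, Finset.mem_union] at hx ⊢
  by_contra! hh
  exact hx (hh.1.trans hh.2)

lemma permHamming_mul_left {k : ℕ} (c a b : Equiv.Perm (Fin k)) :
    permHamming (c * a) (c * b) = permHamming a b := by
  simp [permHamming]

lemma permHamming_mul_right {k : ℕ} (c a b : Equiv.Perm (Fin k)) :
    permHamming (a * c) (b * c) = permHamming a b := by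
  unfold permHamming
  congr 2
  refine Finset.card_bij (fun x _ => c x) ?_ ?_ ?_
  · intro x hx
    exact Finset.mem_filter.2 ⟨Finset.mem_univ _, (Finset.mem_filter.1 hx).2⟩
  · intro x _ y _ hxy; exact c.injective hxy
  · intro y hy; refine ⟨c⁻¹ y, ?_, by simp⟩
    refine Finset.mem_filter.2 ⟨Finset.mem_univ _, ?_⟩
    simpa using (Finset.mem_filter.1 hy).2

lemma permFixRatio_eq {k : ℕ} (hk : 0 < k) (a : Equiv.Perm (Fin k)) :
    permFixRatio a = 1 - permHamming a 1 := by
  have hk' : (k : ℝ) ≠ 0 := by positivity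
  unfold permFixRatio permHamming
  have := Finset.card_filter_add_card_filter_not (s := (Finset.univ : Finset (Fin k)))
    (fun x => a x = x)
  simp only [Finset.card_univ, Fintype.card_fin] at this
  rw [eq_sub_iff_add_eq, ← add_div, div_eq_one_iff_eq hk']
  exact_mod_cast this

/-- The homomorphisms from the free group, extending a sofic approximation. -/
abbrev soficHom {Γ : Type*} {k : ℕ} (f : Γ → Equiv.Perm (Fin k)) :
    FreeGroup Γ →* Equiv.Perm (Fin k) := FreeGroup.lift f

/-- Evaluation of words of the free group in the group. -/
abbrev wordEval (Γ : Type*) [Group Γ] : FreeGroup Γ →* Γ := FreeGroup.lift id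

lemma sofic_tendsto_hamming {Γ : Type*} [Group Γ] (k : ℕ → ℕ)
    (f : ∀ n, Γ → Equiv.Perm (Fin (k n)))
    (hmul : ∀ x y : Γ, Tendsto (fun n => permHamming (f n x * f n y) (f n (x * y))) atTop (𝓝 0)) :
    Tendsto (fun n => permHamming (f n 1) 1) atTop (𝓝 0) ∧ ∀ w : FreeGroup Γ,
    Tendsto (fun n => permHamming (soficHom (f n) w) (f n (wordEval Γ w))) atTop (𝓝 0) := by
  have h1 : Tendsto (fun n => permHamming (f n 1) 1) atTop (𝓝 0) := by
    refine (hmul 1 1).congr fun n => ?_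
    rw [mul_one (1 : Γ)]
    have := permHamming_mul_left (f n 1) (f n 1) 1
    rwa [mul_one] at this
  refine ⟨h1, fun w => ?_⟩
  have hof : ∀ g : Γ, Tendsto (fun n => permHamming (soficHom (f n) (FreeGroup.of g))
      (f n (wordEval Γ (FreeGroup.of g)))) atTop (𝓝 0) := by
    intro g
    simp [permHamming_self]
  induction w using FreeGroup.induction_on with
  | C1 =>
    refine h1.congr fun n => ?_
    rw [map_one, map_one, permHamming_comm]
  | of g => exact hof g
  | inv_of g _ =>
    have := h1.add (hmul g g⁻¹)
    rw [add_zero] at this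
    refine squeeze_zero (fun n => permHamming_nonneg _ _) (fun n => ?_) this
    simp only [map_inv, FreeGroup.lift_apply_of, id]
    rw [← permHamming_mul_left (f n g), mul_inv_cancel, add_comm,
      permHamming_comm (f n 1), permHamming_comm (f n g * _), add_comm, mul_inv_cancel]
    exact permHamming_triangle _ _ _
  | mul x y hx hy =>
    have := (hx.add hy).add (hmul (wordEval Γ x) (wordEval Γ y))
    rw [add_zero, add_zero] at this
    refine squeeze_zero (fun n => permHamming_nonneg _ _) (fun n => ?_) this
    simp only [map_mul]
    refine (permHamming_triangle _ (f n (wordEval Γ x) * f n (wordEval Γ y)) _).trans ?_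
    gcongr
    refine (permHamming_triangle _ (f n (wordEval Γ x) * soficHom (f n) y) _).trans ?_
    rw [permHamming_mul_left, permHamming_mul_right]

lemma sofic_tendsto_fix {Γ : Type*} [Group Γ] (k : ℕ → ℕ)
    (f : ∀ n, Γ → Equiv.Perm (Fin (k n))) (hk : ∀ n, 0 < k n)
    (hmul : ∀ x y : Γ, Tendsto (fun n => permHamming (f n x * f n y) (f n (x * y))) atTop (𝓝 0))
    (hfree : ∀ x : Γ, x ≠ 1 → Tendsto (fun n => permHamming (f n x) 1) atTop (𝓝 1))
    (w : FreeGroup Γ) :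
    Tendsto (fun n => permFixRatio (soficHom (f n) w)) atTop
      (𝓝 (canonicalTrace Γ (wordEval Γ w)).re) := by
  obtain ⟨h1, h2⟩ := sofic_tendsto_hamming k f hmul
  have h2 := h2 w
  have key : Tendsto (fun n => permHamming (f n (wordEval Γ w)) 1) atTop
      (𝓝 (1 - (canonicalTrace Γ (wordEval Γ w)).re)) := by
    by_cases hw : wordEval Γ w = 1
    · rw [hw]; simpa [canonicalTrace] using h1
    · simpa [canonicalTrace, hw] using hfree _ hw
  have key2 : Tendsto (fun n => permHamming (soficHom (f n) w) 1) atTop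
      (𝓝 (1 - (canonicalTrace Γ (wordEval Γ w)).re)) := by
    have ha := key.sub h2
    have hb := key.add h2
    rw [sub_zero] at ha
    rw [add_zero] at hb
    refine tendsto_of_tendsto_of_tendsto_of_le_of_le ha hb (fun n => ?_) (fun n => ?_)
    · have := permHamming_triangle (f n (wordEval Γ w)) (soficHom (f n) w) 1
      rw [permHamming_comm (f n (wordEval Γ w)) (soficHom (f n) w)] at this
      simp only; linarith
    · have := permHamming_triangle (soficHom (f n) w) (f n (wordEval Γ w)) 1
      simp only; linarith
  have := (tendsto_const_nhds (x := (1:ℝ))).sub key2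
  rw [sub_sub_cancel] at this
  exact this.congr fun n => (permFixRatio_eq (hk n) _).symm

end HammingPart

section FinitePart

lemma sum_log_roots_nonneg {ι : Type*} [Fintype ι] [DecidableEq ι] (B : Matrix ι ι ℤ)
    (hB : (B.map (Int.cast : ℤ → ℝ)).IsHermitian) :
    0 ≤ ∑ i, Real.log (hB.eigenvalues i) := by
  have hlog : ∀ l : ℝ, Real.log l
      = Real.log (Polynomial.trailingCoeff (Polynomial.X - Polynomial.C l)) := by
    intro l
    by_cases hl : l = 0
    · subst hl
      simp [Polynomial.trailingCoeff]
    · rw [Polynomial.trailingCoeff_eq_coeff_zero (by simpa using hl)]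
      simp
  have hprod : ∀ s : Finset ι, (∏ i ∈ s, (Polynomial.X - Polynomial.C (hB.eigenvalues i))).trailingCoeff
      = ∏ i ∈ s, (Polynomial.X - Polynomial.C (hB.eigenvalues i)).trailingCoeff := by
    intro s
    induction s using Finset.induction_on with
    | empty => simp [Polynomial.trailingCoeff]
    | insert a s ha ih =>
      rw [Finset.prod_insert ha, Finset.prod_insert ha, Polynomial.trailingCoeff_mul, ih]
  have hne : ∀ i ∈ (Finset.univ : Finset ι),
      (Polynomial.X - Polynomial.C (hB.eigenvalues i)).trailingCoeff ≠ 0 := fun i _ =>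
    Polynomial.trailingCoeff_nonzero_iff_nonzero.2 (Polynomial.X_sub_C_ne_zero _)
  rw [Finset.sum_congr rfl fun i _ => hlog (hB.eigenvalues i), ← Real.log_prod hne, ← hprod]
  have hc := hB.charpoly_eq
  simp only [RCLike.ofReal_real_eq_id, id] at hc
  rw [← hc]
  have hm : (B.map (Int.cast : ℤ → ℝ)).charpoly = B.charpoly.map (Int.castRingHom ℝ) :=
    Matrix.charpoly_map B (Int.castRingHom ℝ)
  have hne' : B.charpoly.trailingCoeff ≠ 0 :=
    Polynomial.trailingCoeff_nonzero_iff_nonzero.2 B.charpoly_monic.ne_zero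
  have ht : (B.charpoly.map (Int.castRingHom ℝ)).trailingCoeff
      = (B.charpoly.trailingCoeff : ℝ) := by
    unfold Polynomial.trailingCoeff
    have : (B.charpoly.map (Int.castRingHom ℝ)).natTrailingDegree
        = B.charpoly.natTrailingDegree := by
      apply le_antisymm
      · apply Polynomial.natTrailingDegree_le_of_ne_zero
        rw [Polynomial.coeff_map]
        simpa using hne'
      · apply Polynomial.natTrailingDegree_le_of_ne_zero
        intro h0
        have : (B.charpoly.map (Int.castRingHom ℝ)).trailingCoeff ≠ 0 := by
          rw [Polynomial.trailingCoeff_nonzero_iff_nonzero, ← hm]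
          exact (Matrix.charpoly_monic _).ne_zero
        apply this
        unfold Polynomial.trailingCoeff
        rw [Polynomial.coeff_map, h0, map_zero]
    rw [this, Polynomial.coeff_map]
    simp
  rw [hm, ht, ← Real.log_abs]
  apply Real.log_nonneg
  exact_mod_cast Int.one_le_abs hne'

lemma trace_pow_eq_sum {ι : Type*} [Fintype ι] [DecidableEq ι] {B : Matrix ι ι ℝ}
    (hB : B.IsHermitian) (l : ℕ) : (B ^ l).trace = ∑ i, hB.eigenvalues i ^ l := by
  conv_lhs => rw [hB.spectral_theorem, ← map_pow]
  rw [Unitary.conjStarAlgAut_apply, Matrix.trace_mul_cycle]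
  simp [Matrix.diagonal_pow, Matrix.trace_diagonal]

lemma eigenvalue_le_of_rows {ι : Type*} [Fintype ι] [DecidableEq ι] {B : Matrix ι ι ℝ}
    (hB : B.IsHermitian) (C : ℝ) (hC : ∀ i, ∑ j, |B i j| ≤ C) (i : ι) :
    hB.eigenvalues i ≤ C := by
  let := Matrix.linftyOpNormedRing (n := ι) (α := ℝ)
  let := Matrix.linftyOpNormedAlgebra (n := ι) (R := ℝ) (α := ℝ)
  have : Nonempty ι := ⟨i⟩
  have : NormOneClass (Matrix ι ι ℝ) := Matrix.linfty_opNormOneClass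
  have : CompleteSpace (Matrix ι ι ℝ) := FiniteDimensional.complete ℝ _
  have h := spectrum.norm_le_norm_of_mem (hB.eigenvalues_mem_spectrum_real i)
  refine (le_abs_self _).trans (h.trans ?_)
  have hC0 : 0 ≤ C := (Finset.sum_nonneg fun j _ => abs_nonneg _).trans (hC i)
  lift C to NNReal using hC0
  rw [Matrix.linfty_opNorm_def]
  norm_cast
  refine Finset.sup_le fun j _ => ?_
  rw [← NNReal.coe_le_coe]
  simpa using hC j

/-- The finite-dimensional estimate. -/
lemma finite_estimate {ι : Type*} [Fintype ι] [DecidableEq ι] (A B : Matrix ι ι ℤ)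
    (hAB : B = Aᵀ * A) (C : ℝ) (hC : ∀ i, ∑ j, |(B i j : ℝ)| ≤ C) (ε : ℝ)
    (p : Polynomial ℝ) (hp : ∀ t ∈ Set.Icc 0 C, Real.log t / 2 - ε ≤ p.eval t) :
    - (ε * Fintype.card ι) ≤ p.sum fun l c => c * ((B ^ l).trace : ℝ) := by
  set A' : Matrix ι ι ℝ := A.map (Int.cast : ℤ → ℝ)
  set B' : Matrix ι ι ℝ := B.map (Int.cast : ℤ → ℝ) with hB'
  have hcast : ∀ M : Matrix ι ι ℤ, M.map (Int.cast : ℤ → ℝ)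
    = (Int.castRingHom ℝ).mapMatrix M := fun M => rfl
  have hpsd : B'.PosSemidef := by
    have : B' = A'ᴴ * A' := by
      rw [hB', hAB, hcast, map_mul]
      rfl
    rw [this]; exact Matrix.posSemidef_conjTranspose_mul_self _
  have hH := hpsd.isHermitian
  have htr : ∀ l, ((B ^ l).trace : ℝ) = ∑ i, hH.eigenvalues i ^ l := by
    intro l
    rw [← trace_pow_eq_sum, hB', hcast, ← map_pow]
    simp [Matrix.trace]
  have h1 : (p.sum fun l c => c * ((B ^ l).trace : ℝ)) = ∑ i, p.eval (hH.eigenvalues i) := by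
    simp only [htr, Polynomial.eval_eq_sum, Polynomial.sum, Finset.mul_sum]
    rw [Finset.sum_comm]
  rw [h1]
  have h2 := sum_log_roots_nonneg B hH
  have h3 : ∑ i, (Real.log (hH.eigenvalues i) / 2 - ε) ≤ ∑ i, p.eval (hH.eigenvalues i) := by
    refine Finset.sum_le_sum fun i _ => hp _ ⟨hpsd.eigenvalues_nonneg i, ?_⟩
    exact eigenvalue_le_of_rows hH C (fun i => by simpa [hB'] using hC i) i
  rw [Finset.sum_sub_distrib, ← Finset.sum_div] at h3
  simp only [Finset.sum_const, Finset.card_univ, nsmul_eq_mul] at h3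
  linarith

end FinitePart

section AlgebraPart

/-- The permutation matrices as a monoid homomorphism. -/
def permMat (k : ℕ) : Equiv.Perm (Fin k) →* Matrix (Fin k) (Fin k) ℤ where
  toFun s := Matrix.of fun x y => if x = s y then 1 else 0
  map_one' := by
    ext x y
    simp only [Matrix.of_apply, Matrix.one_apply, Equiv.Perm.one_apply]
    exact if_congr Iff.rfl rfl rfl
  map_mul' s t := by
    ext x y
    simp only [Matrix.of_apply, Matrix.mul_apply, Equiv.Perm.mul_apply, mul_ite, mul_one, mul_zero,
      Finset.sum_ite_eq', Finset.mem_univ, if_true]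
    exact if_congr Iff.rfl rfl rfl

lemma permMat_apply {k : ℕ} (s : Equiv.Perm (Fin k)) (x y : Fin k) :
    permMat k s x y = if x = s y then 1 else 0 := rfl

lemma permMat_inv {k : ℕ} (s : Equiv.Perm (Fin k)) : permMat k s⁻¹ = (permMat k s)ᵀ := by
  ext x y
  simp only [permMat_apply, Matrix.transpose_apply, Equiv.Perm.eq_inv_iff_eq]
  congr 1
  exact propext eq_comm

lemma permMat_trace {k : ℕ} (s : Equiv.Perm (Fin k)) :
    ((permMat k s).trace : ℝ) / k = permFixRatio s := by
  simp [Matrix.trace, permMat_apply, permFixRatio, eq_comm]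

variable {F : Type*} [Group F]

/-- The representation of the integral group ring on permutation matrices. -/
def rho {k : ℕ} (φ : F →* Equiv.Perm (Fin k)) :
    MonoidAlgebra ℤ F →ₐ[ℤ] Matrix (Fin k) (Fin k) ℤ :=
  MonoidAlgebra.lift ℤ _ F ((permMat k).comp φ)

lemma rho_single {k : ℕ} (φ : F →* Equiv.Perm (Fin k)) (w : F) (c : ℤ) :
    rho φ (MonoidAlgebra.single w c) = c • permMat k (φ w) := by
  simp [rho]

/-- The involution of the integral group ring. -/
def invol (x : MonoidAlgebra ℤ F) : MonoidAlgebra ℤ F :=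
  MonoidAlgebra.mapDomain (fun w => w⁻¹) x

lemma rho_invol {k : ℕ} (φ : F →* Equiv.Perm (Fin k)) (x : MonoidAlgebra ℤ F) :
    rho φ (invol x) = (rho φ x)ᵀ := by
  induction x using MonoidAlgebra.induction_linear with
  | zero => simp [invol]
  | add x y hx hy =>
    simp only [invol, MonoidAlgebra.mapDomain_add, map_add, Matrix.transpose_add] at hx hy ⊢
    rw [hx, hy]
  | single w c =>
    simp only [invol, MonoidAlgebra.mapDomain_single, rho_single, map_inv, permMat_inv,
      Matrix.transpose_smul]

lemma rho_row_bound (x : MonoidAlgebra ℤ F) : ∃ C : ℝ, ∀ (k : ℕ) (φ : F →* Equiv.Perm (Fin k))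
    (s : Fin k), ∑ y, |(rho φ x s y : ℝ)| ≤ C := by
  induction x using MonoidAlgebra.induction_linear with
  | zero => exact ⟨0, fun k φ s => by simp⟩
  | add x y hx hy =>
    obtain ⟨C, hC⟩ := hx
    obtain ⟨D, hD⟩ := hy
    refine ⟨C + D, fun k φ s => ?_⟩
    refine le_trans ?_ (add_le_add (hC k φ s) (hD k φ s))
    rw [← Finset.sum_add_distrib]
    refine Finset.sum_le_sum fun t _ => ?_
    rw [map_add, Matrix.add_apply]
    push_cast
    exact abs_add_le _ _
  | single w c =>
    refine ⟨|(c : ℝ)|, fun k φ s => le_of_eq ?_⟩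
    have : ∀ y, |(rho φ (MonoidAlgebra.single w c) s y : ℝ)|
        = if y = (φ w)⁻¹ s then |(c : ℝ)| else 0 := by
      intro y
      rw [rho_single, Matrix.smul_apply, permMat_apply]
      by_cases h : s = φ w y
      · simp [h]
      · have : y ≠ (φ w)⁻¹ s := by
          intro h'; apply h; rw [h']; simp
        rw [if_neg h, if_neg this]; simp
    simp [this]

/-- The block representation of matrices over the group ring. -/
def blockRep {k : ℕ} (φ : F →* Equiv.Perm (Fin k)) (n : ℕ) :
    Matrix (Fin n) (Fin n) (MonoidAlgebra ℤ F) →+* Matrix (Fin n × Fin k) (Fin n × Fin k) ℤ :=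
  (Matrix.compRingEquiv (Fin n) (Fin k) ℤ).toRingHom.comp (rho φ).toRingHom.mapMatrix

lemma blockRep_apply {k : ℕ} (φ : F →* Equiv.Perm (Fin k)) {n : ℕ}
    (b : Matrix (Fin n) (Fin n) (MonoidAlgebra ℤ F)) (i j : Fin n) (x y : Fin k) :
    blockRep φ n b (i, x) (j, y) = rho φ (b i j) x y := rfl

/-- The involution on matrices over the integral group ring. -/
def starM {n : ℕ} (b : Matrix (Fin n) (Fin n) (MonoidAlgebra ℤ F)) :
    Matrix (Fin n) (Fin n) (MonoidAlgebra ℤ F) := bᵀ.map invol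

lemma blockRep_starM {k : ℕ} (φ : F →* Equiv.Perm (Fin k)) {n : ℕ}
    (b : Matrix (Fin n) (Fin n) (MonoidAlgebra ℤ F)) :
    blockRep φ n (starM b) = (blockRep φ n b)ᵀ := by
  ext ⟨i, x⟩ ⟨j, y⟩
  rw [Matrix.transpose_apply, blockRep_apply, blockRep_apply, starM, Matrix.map_apply,
    rho_invol]
  rfl

lemma blockRep_trace {k : ℕ} (φ : F →* Equiv.Perm (Fin k)) {n : ℕ}
    (b : Matrix (Fin n) (Fin n) (MonoidAlgebra ℤ F)) :
    (blockRep φ n b).trace = ∑ i, (rho φ (b i i)).trace := by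
  simp only [Matrix.trace, Fintype.sum_prod_type, Matrix.diag_apply, blockRep_apply]

lemma blockRep_row_bound {n : ℕ} (b : Matrix (Fin n) (Fin n) (MonoidAlgebra ℤ F)) :
    ∃ C : ℝ, ∀ (k : ℕ) (φ : F →* Equiv.Perm (Fin k)) (s : Fin n × Fin k),
      ∑ y, |(blockRep φ n b s y : ℝ)| ≤ C := by
  choose C hC using fun i j => rho_row_bound (b i j)
  refine ⟨∑ i, ∑ j, |C i j|, fun k φ ⟨i, x⟩ => ?_⟩
  rw [Fintype.sum_prod_type]
  simp only [blockRep_apply]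
  calc ∑ j, ∑ y, |(rho φ (b i j) x y : ℝ)| ≤ ∑ j, |C i j| :=
        Finset.sum_le_sum fun j _ => (hC i j k φ x).trans (le_abs_self _)
    _ ≤ _ := Finset.single_le_sum (f := fun i => ∑ j, |C i j|)
        (fun i _ => Finset.sum_nonneg fun j _ => abs_nonneg _) (Finset.mem_univ i)

end AlgebraPart

section OperatorPart

variable {H : Type*} [NormedAddCommGroup H] [InnerProductSpace ℂ H]

/-- Matrices of operators acting on the direct sum. -/
def opMat {n : ℕ} (M : Matrix (Fin n) (Fin n) (H →L[ℂ] H)) :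
    PiLp 2 (fun _ : Fin n => H) →L[ℂ] PiLp 2 (fun _ : Fin n => H) :=
  matAct (AlgHom.id ℂ (H →L[ℂ] H)) M

lemma opMat_apply {n : ℕ} (M : Matrix (Fin n) (Fin n) (H →L[ℂ] H))
    (v : PiLp 2 (fun _ : Fin n => H)) (i : Fin n) :
    opMat M v i = ∑ j, M i j (v j) := by
  simp [opMat, matAct]

lemma matAct_eq_opMat {R : Type*} [Ring R] [Algebra ℂ R] {n : ℕ}
    (π : R →ₐ[ℂ] (H →L[ℂ] H)) (a : Matrix (Fin n) (Fin n) R) :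
    matAct π a = opMat (a.map π) := rfl

lemma opMat_mul {n : ℕ} (M N : Matrix (Fin n) (Fin n) (H →L[ℂ] H)) :
    opMat (M * N) = opMat M * opMat N := by
  ext v i
  rw [mul_apply_eq_comp]
  simp only [opMat_apply, Matrix.mul_apply, map_sum, _root_.sum_apply,
    mul_apply_eq_comp]
  rw [Finset.sum_comm]

lemma opMat_one {n : ℕ} : opMat (1 : Matrix (Fin n) (Fin n) (H →L[ℂ] H)) = 1 := by
  ext v i
  rw [opMat_apply, Finset.sum_eq_single i]
  · simp
  · intro j _ hj
    simp [Matrix.one_apply_ne hj.symm]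
  · simp

lemma opMat_pow {n : ℕ} (M : Matrix (Fin n) (Fin n) (H →L[ℂ] H)) (l : ℕ) :
    opMat (M ^ l) = opMat M ^ l := by
  induction l with
  | zero => simp [opMat_one]
  | succ l ih => rw [pow_succ, pow_succ, opMat_mul, ih]

lemma opMat_star [CompleteSpace H] {n : ℕ} (M : Matrix (Fin n) (Fin n) (H →L[ℂ] H)) :
    star (opMat M) = opMat (Mᴴ) := by
  symm
  rw [ContinuousLinearMap.star_eq_adjoint, ContinuousLinearMap.eq_adjoint_iff]
  intro v w
  simp only [PiLp.inner_apply, opMat_apply, sum_inner, inner_sum]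
  rw [Finset.sum_comm]
  refine Finset.sum_congr rfl fun i _ => Finset.sum_congr rfl fun j _ => ?_
  rw [Matrix.conjTranspose_apply, ContinuousLinearMap.star_eq_adjoint,
    ContinuousLinearMap.adjoint_inner_left]

variable {G : Type*} [Group G] {φ : G → ℂ} (R : GNSRep G φ)

lemma inner_vec_opMat {n : ℕ} (M : Matrix (Fin n) (Fin n) (R.H →L[ℂ] R.H)) (i : Fin n) :
    inner ℂ (R.vec i) (opMat M (R.vec i)) = inner ℂ R.ξ (M i i R.ξ) := by
  have hv : ∀ j, R.vec i j = (Pi.single i R.ξ : Fin n → R.H) j := fun j => rfl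
  rw [PiLp.inner_apply, Finset.sum_eq_single i]
  · rw [opMat_apply, Finset.sum_eq_single i]
    · simp [hv]
    · intro j _ hj; simp [hv, hj]
    · simp
  · intro j _ hj; simp [hv, hj]
  · simp

/-- The operator representation of the integral group ring of the free group. -/
def opRep : MonoidAlgebra ℤ (FreeGroup G) →ₐ[ℤ] (R.H →L[ℂ] R.H) :=
  MonoidAlgebra.lift ℤ _ (FreeGroup G)
    (((R.π : MonoidAlgebra ℂ G →* (R.H →L[ℂ] R.H)).comp (MonoidAlgebra.of ℂ G)).comp
      (wordEval G))

lemma opRep_single (w : FreeGroup G) (c : ℤ) :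
    opRep R (MonoidAlgebra.single w c) = c • R.π (MonoidAlgebra.of ℂ G (wordEval G w)) := by
  simp [opRep]

lemma opRep_invol (x : MonoidAlgebra ℤ (FreeGroup G)) :
    opRep R (invol x) = star (opRep R x) := by
  induction x using MonoidAlgebra.induction_linear with
  | zero => simp [invol]
  | add x y hx hy =>
    simp only [invol, MonoidAlgebra.mapDomain_add, map_add, star_add] at hx hy ⊢
    rw [hx, hy]
  | single w c =>
    simp only [invol, MonoidAlgebra.mapDomain_single, opRep_single]
    rw [star_zsmul, R.star_of, map_inv]

lemma exists_lift (x : MonoidAlgebra ℂ G) (hx : ∀ g, ∃ m : ℤ, x.coeff g = (m : ℂ)) :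
    ∃ y : MonoidAlgebra ℤ (FreeGroup G), opRep R y = R.π x := by
  classical
  choose m hm using hx
  refine ⟨∑ g ∈ x.coeff.support, MonoidAlgebra.single (FreeGroup.of g) (m g), ?_⟩
  have hx : x = ∑ g ∈ x.coeff.support, (m g : ℤ) • MonoidAlgebra.of ℂ G g := by
    ext g
    rw [MonoidAlgebra.coeff_sum, Finset.sum_apply']
    simp only [← Int.cast_smul_eq_zsmul ℂ, MonoidAlgebra.of_apply, ← hm]
    simp [Finsupp.single_apply]
  conv_rhs => rw [hx]
  rw [map_sum, map_sum]
  refine Finset.sum_congr rfl fun g _ => ?_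
  rw [opRep_single, map_zsmul]
  simp

lemma opMat_opRep_star {n : ℕ} (a : Matrix (Fin n) (Fin n) (MonoidAlgebra ℤ (FreeGroup G))) :
    star (opMat (a.map (opRep R))) = opMat ((starM a).map (opRep R)) := by
  rw [opMat_star]
  congr 1
  ext1 i j
  simp [starM, opRep_invol]

lemma opMat_opRep_pow {n : ℕ} (a : Matrix (Fin n) (Fin n) (MonoidAlgebra ℤ (FreeGroup G)))
    (l : ℕ) :
    opMat ((a ^ l).map (opRep R)) = opMat (a.map (opRep R)) ^ l := by
  rw [← opMat_pow]
  congr 1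
  exact map_pow (opRep R).toRingHom.mapMatrix a l

lemma opMat_opRep_mul {n : ℕ} (a b : Matrix (Fin n) (Fin n) (MonoidAlgebra ℤ (FreeGroup G))) :
    opMat ((a * b).map (opRep R)) = opMat (a.map (opRep R)) * opMat (b.map (opRep R)) := by
  rw [← opMat_mul]
  congr 1
  exact map_mul (opRep R).toRingHom.mapMatrix a b

end OperatorPart

section MainPart

lemma trace_tendsto {Γ : Type*} [Group Γ] (R : GNSRep Γ (canonicalTrace Γ)) (k : ℕ → ℕ)
    (f : ∀ n, Γ → Equiv.Perm (Fin (k n)))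
    (hfix : ∀ w : FreeGroup Γ, Tendsto (fun n => permFixRatio (soficHom (f n) w)) atTop
      (𝓝 (canonicalTrace Γ (wordEval Γ w)).re)) (x : MonoidAlgebra ℤ (FreeGroup Γ)) :
    Tendsto (fun m => ((rho (soficHom (f m)) x).trace : ℝ) / k m) atTop
      (𝓝 (inner ℂ R.ξ (opRep R x R.ξ) : ℂ).re) := by
  induction x using MonoidAlgebra.induction_linear with
  | zero => simp
  | add x y hx hy =>
    have := hx.add hy
    simp only [map_add, _root_.add_apply, inner_add_right, Complex.add_re]
    refine this.congr fun m => ?_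
    rw [Matrix.trace_add]
    push_cast
    ring
  | single w c =>
    have := (hfix w).const_mul (c : ℝ)
    have e : (inner ℂ R.ξ (opRep R (MonoidAlgebra.single w c) R.ξ) : ℂ).re
        = (c : ℝ) * (canonicalTrace Γ (wordEval Γ w)).re := by
      rw [opRep_single, ← R.inner_eq, ← Int.cast_smul_eq_zsmul ℂ, _root_.smul_apply, inner_smul_right]
      simp
    rw [e]
    refine this.congr fun m => ?_
    rw [rho_single, ← permMat_trace, Matrix.trace_smul]
    simp
    ring

lemma norm_vec {Γ : Type*} [Group Γ] (R : GNSRep Γ (canonicalTrace Γ)) {n : ℕ} (i : Fin n) :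
    ‖R.vec i‖ = 1 := by
  have h1 := inner_vec_opMat R (1 : Matrix (Fin n) (Fin n) (R.H →L[ℂ] R.H)) i
  have h2 := R.inner_eq 1
  rw [map_one, map_one] at h2
  rw [opMat_one, Matrix.one_apply_eq, h2] at h1
  simp only [one_apply_eq_self, canonicalTrace, if_true] at h1
  rw [inner_self_eq_norm_sq_to_K] at h1
  have h3 : ‖R.vec i‖ ^ 2 = 1 := by
    apply Complex.ofReal_injective
    rw [Complex.ofReal_pow, Complex.ofReal_one]
    exact h1
  nlinarith [norm_nonneg (R.vec i)]

lemma real_inner_smul_right_aux {E : Type*} [NormedAddCommGroup E] [InnerProductSpace ℂ E]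
    (c : ℝ) (x y : E) : (inner ℂ x (c • y) : ℂ).re = c * (inner ℂ x y : ℂ).re := by
  rw [← Complex.coe_smul, inner_smul_right]
  simp

lemma poly_limit {Γ : Type*} [Group Γ] (R : GNSRep Γ (canonicalTrace Γ)) (k : ℕ → ℕ)
    (f : ∀ n, Γ → Equiv.Perm (Fin (k n)))
    (hfix : ∀ w : FreeGroup Γ, Tendsto (fun n => permFixRatio (soficHom (f n) w)) atTop
      (𝓝 (canonicalTrace Γ (wordEval Γ w)).re)) {n : ℕ}
    (b : Matrix (Fin n) (Fin n) (MonoidAlgebra ℤ (FreeGroup Γ))) (p : Polynomial ℝ) :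
    Tendsto (fun m => (p.sum fun l c => c * (((blockRep (soficHom (f m)) n b) ^ l).trace : ℝ)) / k m)
      atTop (𝓝 (∑ i, (inner ℂ (R.vec i)
        (Polynomial.aeval (opMat (b.map (opRep R))) p (R.vec i)) : ℂ)).re) := by
  have e : (∑ i, (inner ℂ (R.vec i)
        (Polynomial.aeval (opMat (b.map (opRep R))) p (R.vec i)) : ℂ)).re
      = ∑ l ∈ p.support, p.coeff l * ∑ i, (inner ℂ R.ξ (opRep R ((b ^ l) i i) R.ξ) : ℂ).re := by
    rw [Polynomial.aeval_eq_sum_range' (Nat.lt_succ_self _), Complex.re_sum]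
    have hs : ∀ i : Fin n, (inner ℂ (R.vec i) ((∑ l ∈ Finset.range (p.natDegree + 1),
        p.coeff l • opMat (b.map (opRep R)) ^ l) (R.vec i)) : ℂ).re
        = ∑ l ∈ Finset.range (p.natDegree + 1),
          p.coeff l * (inner ℂ R.ξ (opRep R ((b ^ l) i i) R.ξ) : ℂ).re := by
      intro i
      rw [_root_.sum_apply, inner_sum, Complex.re_sum]
      refine Finset.sum_congr rfl fun l _ => ?_
      rw [_root_.smul_apply, ← opMat_opRep_pow, real_inner_smul_right_aux]
      rw [inner_vec_opMat]
      rfl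
    rw [Finset.sum_congr rfl fun i _ => hs i, Finset.sum_comm]
    simp only [← Finset.mul_sum]
    symm
    refine Finset.sum_subset Polynomial.supp_subset_range_natDegree_succ fun l _ hl => ?_
    rw [Polynomial.notMem_support_iff.1 hl, zero_mul]
  rw [e]
  have ht := tendsto_finsetSum (f := fun l m => p.coeff l * ∑ i,
      ((rho (soficHom (f m)) ((b ^ l) i i)).trace : ℝ) / k m) p.support fun l _ =>
    (tendsto_finsetSum Finset.univ fun i _ => trace_tendsto R k f hfix ((b ^ l) i i)).const_mul
      (p.coeff l)
  refine ht.congr fun m => ?_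
  rw [Polynomial.sum, Finset.sum_div]
  refine Finset.sum_congr rfl fun l _ => ?_
  rw [← map_pow, blockRep_trace]
  push_cast
  rw [← Finset.sum_div, mul_div_assoc]

end MainPart

/-- Elek–Szabó: every countable sofic group satisfies Lück's determinant
conjecture: its canonical trace satisfies Lück's condition. -/
theorem stmt11 {Γ : Type*} [Group Γ] [Countable Γ] (h : IsSofic Γ) :
    SatisfiesLueck (canonicalTrace Γ) := by
  obtain ⟨k, f, hk, hmul, hfree⟩ := h
  have hfix := sofic_tendsto_fix k f hk hmul hfree
  intro n hn a ha R
  unfold GNSRep.lnPlusQ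
  refine le_iInf₂ fun g hg => ?_
  obtain ⟨hgc, hgl⟩ := hg
  rw [EReal.coe_nonneg]
  choose a' ha' using fun i j => exists_lift R (a i j) (ha i j)
  have hT : matAct R.π a = opMat ((Matrix.of a').map (opRep R)) := by
    rw [matAct_eq_opMat]
    congr 1
    ext1 i j
    exact (ha' i j).symm
  set A : Matrix (Fin n) (Fin n) (MonoidAlgebra ℤ (FreeGroup Γ)) := Matrix.of a'
  rw [hT]
  set T := opMat (A.map (opRep R)) with hTdef
  set b := starM A * A with hb
  have hTT : star T * T = opMat (b.map (opRep R)) := by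
    rw [hTdef, opMat_opRep_star, ← opMat_opRep_mul]
  have hsa : IsSelfAdjoint (star T * T) := IsSelfAdjoint.star_mul_self T
  have hspec0 : ∀ t ∈ spectrum ℝ (star T * T), 0 ≤ t := fun t ht =>
    spectrum_nonneg_of_nonneg (star_mul_self_nonneg T) ht
  have hcomp : cfc g (cfcAbs T) = cfc (g ∘ Real.sqrt) (star T * T) := by
    unfold cfcAbs
    refine (cfc_comp g Real.sqrt (star T * T) hsa ?_ ?_).symm
    · refine hgc.mono ?_
      rintro _ ⟨t, _, rfl⟩
      exact Real.sqrt_nonneg t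
    · exact Real.continuous_sqrt.continuousOn
  rw [hcomp]
  set hf : ℝ → ℝ := g ∘ Real.sqrt with hhf
  have hcont : ContinuousOn hf (Set.Ici 0) :=
    hgc.comp Real.continuous_sqrt.continuousOn fun t _ => Real.sqrt_nonneg t
  obtain ⟨C, hC⟩ := blockRep_row_bound b
  set K : ℝ := max C ‖star T * T‖ with hK
  have hspec : spectrum ℝ (star T * T) ⊆ Set.Icc 0 K := fun t ht =>
    ⟨hspec0 t ht, (le_abs_self t).trans ((spectrum.norm_le_norm_mul_of_mem ht).trans (by
      refine le_trans ?_ (le_max_right _ _)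
      exact mul_le_of_le_one_right (norm_nonneg _) ContinuousLinearMap.norm_id_le))⟩
  refine le_of_forall_pos_le_add fun δ hδ => ?_
  set ε : ℝ := δ / (2 * n) with hε
  have hn' : (0 : ℝ) < n := by exact_mod_cast hn
  have hε0 : 0 < ε := by positivity
  obtain ⟨p, hp⟩ := exists_polynomial_near_of_continuousOn 0 K hf
    (hcont.mono Set.Icc_subset_Ici_self) ε hε0
  have hplog : ∀ t ∈ Set.Icc 0 K, Real.log t / 2 - ε ≤ p.eval t := by
    intro t ht
    have h1 := hgl (Real.sqrt t) (Real.sqrt_nonneg t)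
    rw [Real.log_sqrt ht.1] at h1
    have h2 := (abs_lt.1 (hp t ht)).1
    simp only [hhf, Function.comp] at h2
    linarith
  -- the limit of polynomial traces is at least -ε n
  have hlim := poly_limit R k f hfix b p
  have hge := ge_of_tendsto' (b := -(ε * n)) hlim (fun m => by
    have hfin := finite_estimate (blockRep (soficHom (f m)) n A) (blockRep (soficHom (f m)) n b)
      (by rw [hb, map_mul, blockRep_starM]) K
      (fun s => (hC (k m) (soficHom (f m)) s).trans (le_max_left _ _)) ε p hplog
    have hkm : (0 : ℝ) < k m := by exact_mod_cast hk m
    rw [le_div_iff₀ hkm]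
    refine le_trans (le_of_eq ?_) hfin
    simp
    ring)
  rw [← hTT] at hge
  -- compare the functional calculus with the polynomial
  have hnorm : ‖Polynomial.aeval (star T * T) p - cfc hf (star T * T)‖ ≤ ε := by
    rw [← cfc_polynomial p (star T * T) hsa,
      ← cfc_sub p.eval hf (star T * T) (by fun_prop) (hcont.mono fun t ht => hspec0 t ht)]
    refine norm_cfc_le hε0.le fun t ht => ?_
    exact (hp t (hspec ht)).le
  have hdiff : ∀ i : Fin n,
      (inner ℂ (R.vec i) (Polynomial.aeval (star T * T) p (R.vec i)) : ℂ).re - ε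
        ≤ (inner ℂ (R.vec i) (cfc hf (star T * T) (R.vec i)) : ℂ).re := by
    intro i
    rw [sub_le_comm, ← Complex.sub_re, ← inner_sub_right, ← _root_.sub_apply]
    refine (Complex.re_le_norm _).trans ((norm_inner_le_norm _ _).trans ?_)
    rw [norm_vec, one_mul]
    refine (ContinuousLinearMap.le_opNorm _ _).trans ?_
    rw [norm_vec, mul_one]
    exact hnorm
  have hsum := Finset.sum_le_sum fun i (_ : i ∈ Finset.univ) => hdiff i
  rw [Finset.sum_sub_distrib] at hsum
  simp only [Finset.sum_const, Finset.card_univ, Fintype.card_fin, nsmul_eq_mul] at hsum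
  rw [Complex.re_sum] at hge ⊢
  have : ε * n = δ / 2 := by
    rw [hε]; field_simp
  linarith

end
end
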